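/- Let d ≥ 1. There exist constants c, C > 0 depending only on d such that for all x ∈ ℝ^d_+ and all r with 1 ≤ r ≤ min_{1 ≤ i ≤ d} xᵢ, the diamond D(x,r) = {y ∈ ℝ^d_+ : |x − y|₁ < r} is contained in ℝ^d_+ and c · exp(−(|x|₁ − r)) · r^{d−1} ≤ μ(D(x,r)) ≤ C · exp(−(|x|₁ − r)) · r^{d−1}, where |x|₁ = x₁ + ⋯ + x_d. -/

import Mathlib

open MeasureTheory ENNReal

/-- The exponential measure `dμ(x) = exp(-|x₁|-⋯-|x_d|) dx` on `ℝ^d`; the diamonds considered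
below are contained in `ℝ^d_+`, so this also computes the restricted measure. -/
noncomputable def expMeasure (d : ℕ) : Measure (Fin d → ℝ) :=
  volume.withDensity (fun x => ENNReal.ofReal (Real.exp (-∑ i, |x i|)))

lemma lintegral_cons (n : ℕ) (f : (Fin (n+1) → ℝ) → ℝ≥0∞) (hf : Measurable f) :
    ∫⁻ y, f y = ∫⁻ y' : Fin n → ℝ, ∫⁻ t : ℝ, f (Fin.cons t y') := by
  have h := (volume_preserving_piFinSuccAbove (fun _ : Fin (n+1) => ℝ) 0).symm
  rw [← h.lintegral_comp hf, Measure.volume_eq_prod,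
    lintegral_prod_symm (fun z => f ((MeasurableEquiv.piFinSuccAbove (fun _ => ℝ) 0).symm z))
      (hf.comp h.measurable).aemeasurable]
  simp [MeasurableEquiv.piFinSuccAbove_symm_apply, Fin.insertNthEquiv, Fin.insertNth_zero']

lemma inner_upper (A S : ℝ) :
    ∫⁻ t in Set.Ioi (A - S), ENNReal.ofReal (Real.exp (-(t + S)))
      = ENNReal.ofReal (Real.exp (-A)) := by
  have h1 : ∀ t : ℝ, Real.exp (-(t + S)) = Real.exp (-S) * Real.exp (-t) := by
    intro t; rw [← Real.exp_add]; ring_nf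
  simp_rw [h1]
  rw [← ofReal_integral_eq_lintegral_ofReal]
  · rw [integral_const_mul, integral_exp_neg_Ioi, ← Real.exp_add]; ring_nf
  · exact (integrableOn_exp_neg_Ioi _).const_mul _
  · exact Filter.Eventually.of_forall fun t => by positivity

lemma inner_lower (A S : ℝ) :
    ENNReal.ofReal (Real.exp (-A) * (Real.exp (-(1/2)) / 2)) ≤
    ∫⁻ t in Set.Ioo (A - S) (A - S + 1/2), ENNReal.ofReal (Real.exp (-(t + S))) := by
  have h : ∫⁻ t in Set.Ioo (A - S) (A - S + 1/2), ENNReal.ofReal (Real.exp (-(A + 1/2)))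
      ≤ ∫⁻ t in Set.Ioo (A - S) (A - S + 1/2), ENNReal.ofReal (Real.exp (-(t + S))) := by
    apply setLIntegral_mono' measurableSet_Ioo
    intro t ht
    apply ENNReal.ofReal_le_ofReal
    apply Real.exp_le_exp.2
    linarith [ht.2]
  refine le_trans (le_of_eq ?_) h
  rw [setLIntegral_const, Real.volume_Ioo, ← ENNReal.ofReal_mul (by positivity), neg_add,
    Real.exp_add]
  congr 1; ring

lemma diamond_aux (n : ℕ) (x : Fin (n+1) → ℝ) (r : ℝ) (hr : 1 ≤ r) (hx : ∀ i, r ≤ x i) :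
    {y : Fin (n+1) → ℝ | ∑ i, |x i - y i| < r} ⊆ {y | ∀ i, 0 < y i} := by
  intro y hy i
  have h1 : |x i - y i| ≤ ∑ i, |x i - y i| :=
    Finset.single_le_sum (f := fun i => |x i - y i|) (fun _ _ => abs_nonneg _) (Finset.mem_univ i)
  have h2 : ∑ i, |x i - y i| < r := hy
  have := le_abs_self (x i - y i)
  linarith [hx i]

lemma diamond_meas (n : ℕ) (x : Fin (n+1) → ℝ) (r : ℝ) :
    MeasurableSet {y : Fin (n+1) → ℝ | ∑ i, |x i - y i| < r} :=
  measurableSet_lt (by fun_prop) (by fun_prop)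

lemma expMeasure_eq (n : ℕ) (D : Set (Fin (n+1) → ℝ)) (hD : MeasurableSet D) :
    expMeasure (n+1) D = ∫⁻ y' : Fin n → ℝ, ∫⁻ t : ℝ,
      D.indicator (fun y => ENNReal.ofReal (Real.exp (-∑ i, |y i|))) (Fin.cons t y') := by
  rw [expMeasure, withDensity_apply _ hD, ← lintegral_indicator hD, lintegral_cons]
  exact Measurable.indicator (by fun_prop) hD

lemma upper (n : ℕ) (x : Fin (n+1) → ℝ) (r : ℝ) (hr : 1 ≤ r) (hx : ∀ i, r ≤ x i) :
    expMeasure (n+1) {y : Fin (n+1) → ℝ | ∑ i, |x i - y i| < r}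
      ≤ ENNReal.ofReal (2 ^ n * Real.exp (-((∑ i, x i) - r)) * r ^ n) := by
  rw [expMeasure_eq _ _ (diamond_meas n x r)]
  set A := (∑ i, x i) - r with hA
  set Q : Set (Fin n → ℝ) :=
    Set.univ.pi fun i : Fin n => Set.Ioo (x i.succ - r) (x i.succ + r) with hQ
  have hQm : MeasurableSet Q := MeasurableSet.univ_pi fun _ => measurableSet_Ioo
  calc _ ≤ ∫⁻ y' : Fin n → ℝ, Q.indicator (fun _ => ENNReal.ofReal (Real.exp (-A))) y' := by
        apply lintegral_mono
        intro y'
        by_cases hy : y' ∈ Q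
        · simp only [Set.indicator_of_mem hy]
          rw [← inner_upper A (∑ i, y' i), ← lintegral_indicator measurableSet_Ioi]
          apply lintegral_mono
          intro t
          by_cases hD : (Fin.cons t y' : Fin (n+1) → ℝ) ∈
              {y : Fin (n+1) → ℝ | ∑ i, |x i - y i| < r}
          · have hpos := diamond_aux n x r hr hx hD
            have h1 : ∑ i, |(Fin.cons t y' : Fin (n+1) → ℝ) i| = t + ∑ i, y' i := by
              rw [Finset.sum_congr rfl fun i _ => abs_of_pos (hpos i)]
              simp [Fin.sum_univ_succ]
            have h2 : t ∈ Set.Ioi (A - ∑ i, y' i) := by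
              have h3 : ∑ i, (x i - (Fin.cons t y' : Fin (n+1) → ℝ) i) < r :=
                lt_of_le_of_lt (Finset.sum_le_sum fun i _ => le_abs_self _) hD
              rw [Finset.sum_sub_distrib, Fin.sum_univ_succ (fun i => (Fin.cons t y' : Fin (n+1) → ℝ) i)] at h3
              simp only [Fin.cons_zero, Fin.cons_succ] at h3
              simp only [Set.mem_Ioi]
              linarith
            simp only [Set.indicator_of_mem hD, Set.indicator_of_mem h2, h1, le_refl]
          · simp only [Set.indicator_of_notMem hD, zero_le]
        · have h0 : ∀ t : ℝ, (Fin.cons t y' : Fin (n+1) → ℝ) ∉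
              {y : Fin (n+1) → ℝ | ∑ i, |x i - y i| < r} := by
            intro t hD
            apply hy
            intro i _
            have h1 := Finset.single_le_sum
              (f := fun i => |x i - (Fin.cons t y' : Fin (n+1) → ℝ) i|)
              (fun _ _ => abs_nonneg _) (Finset.mem_univ i.succ)
            have h2 := lt_of_le_of_lt h1 hD
            simp only [Fin.cons_succ] at h2
            have h3 := abs_lt.1 h2
            constructor <;> linarith [h3.1, h3.2]
          simp only [Set.indicator_of_notMem (h0 _), lintegral_zero, zero_le]
    _ = _ := by
        rw [lintegral_indicator hQm, setLIntegral_const, hQ, Real.volume_pi_Ioo,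
          ← ENNReal.ofReal_prod_of_nonneg (fun i _ => by linarith),
          ← ENNReal.ofReal_mul (by positivity)]
        congr 1
        have : ∀ i : Fin n, x i.succ + r - (x i.succ - r) = 2 * r := fun i => by ring
        simp only [this, Finset.prod_const, Finset.card_univ, Fintype.card_fin, mul_pow]
        ring

lemma lower (n : ℕ) (x : Fin (n+1) → ℝ) (r : ℝ) (hr : 1 ≤ r) (hx : ∀ i, r ≤ x i) :
    ENNReal.ofReal ((Real.exp (-(1/2)) / 2 * (1 / (2 * (n + 1))) ^ n)
        * Real.exp (-((∑ i, x i) - r)) * r ^ n)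
      ≤ expMeasure (n+1) {y : Fin (n+1) → ℝ | ∑ i, |x i - y i| < r} := by
  rw [expMeasure_eq _ _ (diamond_meas n x r)]
  set A := (∑ i, x i) - r with hA
  set δ : ℝ := r / (2 * (n + 1)) with hδ
  have hδ0 : 0 < δ := by positivity
  have hnδ : n * δ ≤ r / 2 := by
    have : (n + 1) * δ = r / 2 := by rw [hδ]; field_simp
    linarith
  set Q : Set (Fin n → ℝ) :=
    Set.univ.pi fun i : Fin n => Set.Ioo (x i.succ - δ) (x i.succ) with hQ
  have hQm : MeasurableSet Q := MeasurableSet.univ_pi fun _ => measurableSet_Ioo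
  calc _ = ∫⁻ y' : Fin n → ℝ, Q.indicator
            (fun _ => ENNReal.ofReal (Real.exp (-A) * (Real.exp (-(1/2)) / 2))) y' := by
        rw [lintegral_indicator hQm, setLIntegral_const, hQ, Real.volume_pi_Ioo,
          ← ENNReal.ofReal_prod_of_nonneg (fun i _ => by linarith),
          ← ENNReal.ofReal_mul (by positivity)]
        congr 1
        have : ∀ i : Fin n, x i.succ - (x i.succ - δ) = 1 / (2 * (n + 1)) * r := fun i => by
          rw [hδ]; ring
        simp only [this, Finset.prod_const, Finset.card_univ, Fintype.card_fin, mul_pow]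
        ring
    _ ≤ _ := by
        apply lintegral_mono
        intro y'
        by_cases hy : y' ∈ Q
        · simp only [Set.indicator_of_mem hy]
          refine (inner_lower A (∑ i, y' i)).trans ?_
          rw [← lintegral_indicator measurableSet_Ioo]
          apply lintegral_mono
          intro t
          by_cases ht : t ∈ Set.Ioo (A - ∑ i, y' i) (A - ∑ i, y' i + 1/2)
          · have hy1 : ∀ i, x i.succ - δ < y' i ∧ y' i < x i.succ := fun i => hy i trivial
            have hs : ∑ i : Fin n, (x i.succ - y' i) ≤ n * δ := by
              calc _ ≤ ∑ i : Fin n, δ := Finset.sum_le_sum fun i _ => by linarith [(hy1 i).1]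
                _ = _ := by simp
            rw [Finset.sum_sub_distrib] at hs
            have hxs := Fin.sum_univ_succ x
            have ht0 : t ≤ x 0 := by linarith [ht.2]
            have hD : (Fin.cons t y' : Fin (n+1) → ℝ) ∈
                {y : Fin (n+1) → ℝ | ∑ i, |x i - y i| < r} := by
              simp only [Set.mem_ofPred_eq, Fin.sum_univ_succ, Fin.cons_zero, Fin.cons_succ]
              rw [abs_of_nonneg (by linarith),
                Finset.sum_congr rfl fun i _ => abs_of_pos (sub_pos.2 (hy1 i).2),
                Finset.sum_sub_distrib]
              linarith [ht.1]
            have hpos := diamond_aux n x r hr hx hD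
            have h1 : ∑ i, |(Fin.cons t y' : Fin (n+1) → ℝ) i| = t + ∑ i, y' i := by
              rw [Finset.sum_congr rfl fun i _ => abs_of_pos (hpos i)]
              simp [Fin.sum_univ_succ]
            simp only [Set.indicator_of_mem hD, Set.indicator_of_mem ht, h1, le_refl]
          · simp only [Set.indicator_of_notMem ht, zero_le]
        · simp only [Set.indicator_of_notMem hy, zero_le]

/-- Sharp estimate for the measure of large diamonds away from the boundary of `ℝ^d_+`:
for `x ∈ ℝ^d_+` and `1 ≤ r ≤ min_i x_i`, the diamond `D(x,r)` lies in `ℝ^d_+` and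
`μ(D(x,r)) ≍ exp(-(|x|₁ - r)) r^(d-1)`, with constants depending only on `d`. -/
theorem expMeasure_diamond_estimate (d : ℕ) (hd : 1 ≤ d) :
    ∃ c C : ℝ, 0 < c ∧ 0 < C ∧
      ∀ x : Fin d → ℝ, (∀ i, 0 < x i) → ∀ r : ℝ, 1 ≤ r → (∀ i, r ≤ x i) →
        {y : Fin d → ℝ | ∑ i, |x i - y i| < r} ⊆ {y | ∀ i, 0 < y i} ∧
        ENNReal.ofReal (c * Real.exp (-((∑ i, x i) - r)) * r ^ ((d : ℝ) - 1))
          ≤ expMeasure d {y : Fin d → ℝ | ∑ i, |x i - y i| < r} ∧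
        expMeasure d {y : Fin d → ℝ | ∑ i, |x i - y i| < r}
          ≤ ENNReal.ofReal (C * Real.exp (-((∑ i, x i) - r)) * r ^ ((d : ℝ) - 1)) := by
  obtain ⟨n, rfl⟩ : ∃ n, d = n + 1 := ⟨d - 1, by omega⟩
  refine ⟨Real.exp (-(1/2)) / 2 * (1 / (2 * (n + 1))) ^ n, 2 ^ n, by positivity, by positivity, ?_⟩
  intro x _ r hr hx
  have e : r ^ (((n + 1 : ℕ) : ℝ) - 1) = r ^ n := by
    rw [← Real.rpow_natCast]; push_cast; ring_nf
  rw [e]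
  exact ⟨diamond_aux n x r hr hx, lower n x r hr hx, upper n x r hr hx⟩
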